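/- arXiv:math/0309097 — 2 statements merged into one kernel-verified Lean document; each statement's English description precedes it below -/
import Mathlib

section
/- Let ψ₁, ψ₂, φ₁, φ₂ be smooth complex functions with φ₁, φ₂ nowhere zero, satisfying the generalised CP² Weierstrass system (equations (4.1)–(4.4) of Grundland–Zakrzewski). Then the functions w₁ = ψ₁/φ̄₁ and w₂ = ψ₂/φ̄₂ satisfy ∂w₁ = A[w₁w̄₂φ₂² + (1+|w₁|²)φ₁²] and ∂w₂ = A[w̄₁w₂φ₁² + (1+|w₂|²)φ₂²], where A = 1 + |w₁|² + |w₂|². -/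
open Complex ComplexConjugate

/-- The Wirtinger derivative `∂ = ∂/∂z`. -/
noncomputable def wdz (f : ℂ → ℂ) (z : ℂ) : ℂ :=
  (1 / 2 : ℂ) * (fderiv ℝ f z 1 - I * fderiv ℝ f z I)

/-- The Wirtinger derivative `∂̄ = ∂/∂z̄`. -/
noncomputable def wdzbar (f : ℂ → ℂ) (z : ℂ) : ℂ :=
  (1 / 2 : ℂ) * (fderiv ℝ f z 1 + I * fderiv ℝ f z I)

/-!
With `w₁ = ψ₁ / φ̄₁` and `w₂ = ψ₂ / φ̄₂`, the two bracketed expressions in the conclusion are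
`Q̄` and `P̄`, so the claim is `∂w₁ = A Q̄` and `∂w₂ = A P̄`. As `∂φ̄₁` is the conjugate of `∂̄φ₁`,
the quotient rule gives `∂w₁ = ∂ψ₁ / φ̄₁ - w₁ conj (∂̄φ₁) / φ̄₁`. After division by `φ̄₁`, the
`P̄` terms of the two summands cancel, while the `Q̄` terms contribute `1 + |w₂|²` and `|w₁|²`.
The equation for `w₂` follows by exchanging the indices `1 ↔ 2` together with `P ↔ Q`.
-/

section Wirtinger

variable {f g : ℂ → ℂ} {z : ℂ}

lemma wdz_fun_mul (hf : DifferentiableAt ℝ f z) (hg : DifferentiableAt ℝ g z) :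
    wdz (fun ζ => f ζ * g ζ) z = wdz f z * g z + f z * wdz g z := by
  simp only [wdz, fderiv_fun_mul hf hg, add_apply, smul_apply, smul_eq_mul]
  ring

lemma wdz_fun_div (hf : DifferentiableAt ℝ f z) (hg : DifferentiableAt ℝ g z) (hg₀ : g z ≠ 0) :
    wdz (fun ζ => f ζ / g ζ) z = (wdz f z * g z - f z * wdz g z) / g z ^ 2 := by
  have hdiv : DifferentiableAt ℝ (fun ζ => f ζ / g ζ) z := by
    simpa only [div_eq_mul_inv] using hf.fun_mul (hg.fun_inv hg₀)
  have hcancel : (fun ζ => f ζ / g ζ * g ζ) =ᶠ[nhds z] f := by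
    filter_upwards [hg.continuousAt.eventually_ne hg₀] with ζ hζ
    exact div_mul_cancel₀ (f ζ) hζ
  have hleibniz : wdz f z = wdz (fun ζ => f ζ / g ζ) z * g z + f z / g z * wdz g z := by
    rw [← wdz_fun_mul hdiv hg, wdz, wdz, hcancel.fderiv_eq]
  rw [hleibniz]
  field_simp
  ring

lemma wdz_conj (f : ℂ → ℂ) (z : ℂ) : wdz (fun ζ => conj (f ζ)) z = conj (wdzbar f z) := by
  have hfderiv (v : ℂ) : fderiv ℝ (fun ζ => conj (f ζ)) z v = conj (fderiv ℝ f z v) :=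
    congrArg (· v) (fderiv_star (𝕜 := ℝ) (f := f))
  simp only [wdz, wdzbar, hfderiv, map_mul, map_add, map_div₀, map_one, map_ofNat, conj_I]
  ring

lemma wdz_div_conj (hf : DifferentiableAt ℝ f z) (hg : DifferentiableAt ℝ g z) (hg₀ : g z ≠ 0) :
    wdz (fun ζ => f ζ / conj (g ζ)) z =
      wdz f z / conj (g z) - f z / conj (g z) * (conj (wdzbar g z) / conj (g z)) := by
  have hconj₀ : conj (g z) ≠ 0 := (map_ne_zero _).mpr hg₀
  have hconj : DifferentiableAt ℝ (fun ζ => conj (g ζ)) z := hg.star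
  rw [wdz_fun_div hf hconj hconj₀, wdz_conj]
  field_simp

end Wirtinger

lemma conj_gw_potential (ψ ψ' φ' : ℂ) {φ : ℂ} (hφ : φ ≠ 0) :
    conj (conj ψ * ψ' * conj φ' / φ + ((normSq φ : ℂ) + normSq ψ) * conj φ / φ) =
      ψ / conj φ * conj (ψ' / conj φ') * φ' ^ 2 + (1 + (normSq (ψ / conj φ) : ℂ)) * φ ^ 2 := by
  have hconj₀ : conj φ ≠ 0 := (map_ne_zero _).mpr hφ
  simp only [← mul_conj]
  simp only [map_add, map_mul, map_div₀, conj_conj]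
  field_simp

/-- `ψ'` and `φ'` stand for the values at `z` of the other component, whose derivatives do not
enter. -/
lemma wdz_div_conj_of_gw {ψ φ : ℂ → ℂ} {z ψ' φ' P Q : ℂ}
    (hψ : DifferentiableAt ℝ ψ z) (hφ : DifferentiableAt ℝ φ z) (hφ₀ : φ z ≠ 0)
    (h_wdz : wdz ψ z =
      (1 + (normSq ψ' : ℂ) / (normSq φ' : ℂ)) * conj (φ z) * conj Q
        - (1 / 2 : ℂ) * (ψ z * conj ψ' / φ'
            + (normSq (ψ z) : ℂ) / (normSq (φ z) : ℂ)
              * (conj φ' ^ 2 / conj (φ z))) * conj P)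
    (h_wdzbar : wdzbar φ z =
      -(1 / 2 : ℂ) * ((ψ' / conj φ' * P + 2 * (ψ z / conj (φ z)) * Q) * φ z
        + P * ψ z * φ' ^ 2 / (normSq (φ z) : ℂ))) :
    wdz (fun ζ => ψ ζ / conj (φ ζ)) z =
      (1 + (normSq (ψ z / conj (φ z)) : ℂ) + (normSq (ψ' / conj φ') : ℂ)) * conj Q := by
  have hconj₀ : conj (φ z) ≠ 0 := (map_ne_zero _).mpr hφ₀
  set w := ψ z / conj (φ z) with hw
  set w' := ψ' / conj φ' with hw'
  have h_wdz_div : wdz ψ z / conj (φ z) =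
      (1 + w' * conj w') * conj Q
        - 1 / 2 * (w * conj w' + w * conj w * (conj φ' / conj (φ z)) ^ 2) * conj P := by
    rw [h_wdz, hw, hw']
    simp only [← mul_conj, map_div₀, conj_conj]
    field_simp
  have h_wdzbar_div : conj (wdzbar φ z) / conj (φ z) =
      -(1 / 2) * (2 * conj w * conj Q
        + (conj w' + conj w * (conj φ' / conj (φ z)) ^ 2) * conj P) := by
    rw [h_wdzbar, hw, hw']
    simp only [← mul_conj, map_add, map_mul, map_div₀, map_neg, map_pow, map_one, map_ofNat,
      conj_conj]
    field_simp
    ring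
  rw [wdz_div_conj hψ hφ hφ₀, h_wdz_div, h_wdzbar_div, ← mul_conj, ← mul_conj]
  ring

theorem cp2_gw_to_w_derivatives_general {ψ₁ ψ₂ φ₁ φ₂ : ℂ → ℂ} {z : ℂ}
    (hψ₁ : DifferentiableAt ℝ ψ₁ z) (hψ₂ : DifferentiableAt ℝ ψ₂ z)
    (hφ₁ : DifferentiableAt ℝ φ₁ z) (hφ₂ : DifferentiableAt ℝ φ₂ z)
    (hφ₁ne : φ₁ z ≠ 0) (hφ₂ne : φ₂ z ≠ 0) {P Q : ℂ}
    (hP : P = ψ₁ z * conj (ψ₂ z) * conj (φ₁ z) / φ₂ z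
      + ((normSq (φ₂ z) : ℂ) + (normSq (ψ₂ z) : ℂ)) * conj (φ₂ z) / φ₂ z)
    (hQ : Q = conj (ψ₁ z) * ψ₂ z * conj (φ₂ z) / φ₁ z
      + ((normSq (φ₁ z) : ℂ) + (normSq (ψ₁ z) : ℂ)) * conj (φ₁ z) / φ₁ z)
    (h1 : wdz ψ₁ z =
      (1 + (normSq (ψ₂ z) : ℂ) / (normSq (φ₂ z) : ℂ)) * conj (φ₁ z) * conj Q
        - (1 / 2 : ℂ) * (ψ₁ z * conj (ψ₂ z) / φ₂ z
            + (normSq (ψ₁ z) : ℂ) / (normSq (φ₁ z) : ℂ)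
              * (conj (φ₂ z) ^ 2 / conj (φ₁ z))) * conj P)
    (h2 : wdz ψ₂ z =
      (1 + (normSq (ψ₁ z) : ℂ) / (normSq (φ₁ z) : ℂ)) * conj (φ₂ z) * conj P
        - (1 / 2 : ℂ) * (conj (ψ₁ z) * ψ₂ z / φ₁ z
            + (normSq (ψ₂ z) : ℂ) / (normSq (φ₂ z) : ℂ)
              * (conj (φ₁ z) ^ 2 / conj (φ₂ z))) * conj Q)
    (h3 : wdzbar φ₁ z =
      -(1 / 2 : ℂ) * ((ψ₂ z / conj (φ₂ z) * P + 2 * (ψ₁ z / conj (φ₁ z)) * Q) * φ₁ z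
        + P * ψ₁ z * φ₂ z ^ 2 / (normSq (φ₁ z) : ℂ)))
    (h4 : wdzbar φ₂ z =
      -(1 / 2 : ℂ) * ((ψ₁ z / conj (φ₁ z) * Q + 2 * (ψ₂ z / conj (φ₂ z)) * P) * φ₂ z
        + Q * ψ₂ z * φ₁ z ^ 2 / (normSq (φ₂ z) : ℂ)))
    {w₁ w₂ : ℂ → ℂ} {A : ℂ}
    (hw₁ : ∀ ζ, w₁ ζ = ψ₁ ζ / conj (φ₁ ζ)) (hw₂ : ∀ ζ, w₂ ζ = ψ₂ ζ / conj (φ₂ ζ))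
    (hA : A = 1 + (normSq (w₁ z) : ℂ) + (normSq (w₂ z) : ℂ)) :
    wdz w₁ z = A * (w₁ z * conj (w₂ z) * φ₂ z ^ 2 + (1 + (normSq (w₁ z) : ℂ)) * φ₁ z ^ 2) ∧
      wdz w₂ z = A * (conj (w₁ z) * w₂ z * φ₁ z ^ 2 + (1 + (normSq (w₂ z) : ℂ)) * φ₂ z ^ 2) := by
  obtain rfl : w₁ = fun ζ => ψ₁ ζ / conj (φ₁ ζ) := funext hw₁
  obtain rfl : w₂ = fun ζ => ψ₂ ζ / conj (φ₂ ζ) := funext hw₂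
  have hw₁_eq := wdz_div_conj_of_gw hψ₁ hφ₁ hφ₁ne h1 h3
  have hw₂_eq := wdz_div_conj_of_gw hψ₂ hφ₂ hφ₂ne (by rw [h2, mul_comm (ψ₂ z)]) h4
  have hQ_conj := hQ ▸ conj_gw_potential (ψ₁ z) (ψ₂ z) (φ₂ z) hφ₁ne
  have hP_conj := conj_gw_potential (ψ₂ z) (ψ₁ z) (φ₁ z) hφ₂ne
  rw [mul_comm (conj (ψ₂ z)), ← hP] at hP_conj
  constructor
  · rw [hw₁_eq, hQ_conj, hA]
  · rw [hw₂_eq, hP_conj, hA]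
    ring

/-- If `(ψ₁, ψ₂, φ₁, φ₂)` solve the generalised `CP²` Weierstrass system
(4.1)–(4.5) of Grundland–Zakrzewski, then `w₁ = ψ₁/φ̄₁`, `w₂ = ψ₂/φ̄₂` satisfy
`∂w₁ = A[w₁w̄₂φ₂² + (1+|w₁|²)φ₁²]` and `∂w₂ = A[w̄₁w₂φ₁² + (1+|w₂|²)φ₂²]`,
where `A = 1 + |w₁|² + |w₂|²`. -/
theorem cp2_gw_to_w_derivatives (s : Set ℂ) (hs : IsOpen s)
    (ψ₁ ψ₂ φ₁ φ₂ : ℂ → ℂ)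
    (hψ₁ : ContDiffOn ℝ (⊤ : ℕ∞) ψ₁ s) (hψ₂ : ContDiffOn ℝ (⊤ : ℕ∞) ψ₂ s)
    (hφ₁ : ContDiffOn ℝ (⊤ : ℕ∞) φ₁ s) (hφ₂ : ContDiffOn ℝ (⊤ : ℕ∞) φ₂ s)
    (hφ₁ne : ∀ z ∈ s, φ₁ z ≠ 0) (hφ₂ne : ∀ z ∈ s, φ₂ z ≠ 0)
    (P Q : ℂ → ℂ)
    (hP : ∀ z, P z = ψ₁ z * conj (ψ₂ z) * conj (φ₁ z) / φ₂ z
      + (((normSq (φ₂ z) : ℝ) : ℂ) + ((normSq (ψ₂ z) : ℝ) : ℂ)) * conj (φ₂ z) / φ₂ z)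
    (hQ : ∀ z, Q z = conj (ψ₁ z) * ψ₂ z * conj (φ₂ z) / φ₁ z
      + (((normSq (φ₁ z) : ℝ) : ℂ) + ((normSq (ψ₁ z) : ℝ) : ℂ)) * conj (φ₁ z) / φ₁ z)
    (h1 : ∀ z ∈ s, wdz ψ₁ z =
      (1 + ((normSq (ψ₂ z) : ℝ) : ℂ) / ((normSq (φ₂ z) : ℝ) : ℂ)) * conj (φ₁ z) * conj (Q z)
        - (1 / 2 : ℂ) * (ψ₁ z * conj (ψ₂ z) / φ₂ z
            + ((normSq (ψ₁ z) : ℝ) : ℂ) / ((normSq (φ₁ z) : ℝ) : ℂ)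
              * (conj (φ₂ z) ^ 2 / conj (φ₁ z))) * conj (P z))
    (h2 : ∀ z ∈ s, wdz ψ₂ z =
      (1 + ((normSq (ψ₁ z) : ℝ) : ℂ) / ((normSq (φ₁ z) : ℝ) : ℂ)) * conj (φ₂ z) * conj (P z)
        - (1 / 2 : ℂ) * (conj (ψ₁ z) * ψ₂ z / φ₁ z
            + ((normSq (ψ₂ z) : ℝ) : ℂ) / ((normSq (φ₂ z) : ℝ) : ℂ)
              * (conj (φ₁ z) ^ 2 / conj (φ₂ z))) * conj (Q z))
    (h3 : ∀ z ∈ s, wdzbar φ₁ z =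
      -(1 / 2 : ℂ) * ((ψ₂ z / conj (φ₂ z) * P z + 2 * (ψ₁ z / conj (φ₁ z)) * Q z) * φ₁ z
        + P z * ψ₁ z * φ₂ z ^ 2 / ((normSq (φ₁ z) : ℝ) : ℂ)))
    (h4 : ∀ z ∈ s, wdzbar φ₂ z =
      -(1 / 2 : ℂ) * ((ψ₁ z / conj (φ₁ z) * Q z + 2 * (ψ₂ z / conj (φ₂ z)) * P z) * φ₂ z
        + Q z * ψ₂ z * φ₁ z ^ 2 / ((normSq (φ₂ z) : ℝ) : ℂ)))
    (w₁ w₂ A : ℂ → ℂ)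
    (hw₁ : ∀ z, w₁ z = ψ₁ z / conj (φ₁ z)) (hw₂ : ∀ z, w₂ z = ψ₂ z / conj (φ₂ z))
    (hA : ∀ z, A z = 1 + ((normSq (w₁ z) : ℝ) : ℂ) + ((normSq (w₂ z) : ℝ) : ℂ)) :
    ∀ z ∈ s,
      wdz w₁ z = A z * (w₁ z * conj (w₂ z) * φ₂ z ^ 2
          + (1 + ((normSq (w₁ z) : ℝ) : ℂ)) * φ₁ z ^ 2) ∧
      wdz w₂ z = A z * (conj (w₁ z) * w₂ z * φ₁ z ^ 2
          + (1 + ((normSq (w₂ z) : ℝ) : ℂ)) * φ₂ z ^ 2) := by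
  intro z hz
  have hdiff {f : ℂ → ℂ} (hf : ContDiffOn ℝ (⊤ : ℕ∞) f s) : DifferentiableAt ℝ f z :=
    (hf.contDiffAt (hs.mem_nhds hz)).differentiableAt (by simp)
  exact cp2_gw_to_w_derivatives_general (hdiff hψ₁) (hdiff hψ₂) (hdiff hφ₁) (hdiff hφ₂)
    (hφ₁ne z hz) (hφ₂ne z hz) (hP z) (hQ z) (h1 z hz) (h2 z hz) (h3 z hz) (h4 z hz) hw₁ hw₂ (hA z)
end

section
/- The functions w₁ = (z̄ + z)/(1 − |z|²) and w₂ = (z̄ − z)/(1 − |z|²), defined on the open set {z ∈ ℂ : |z| ≠ 1}, solve the CP² sigma model equations, and satisfy A = 1 + |w₁|² + |w₂|² = ((1 + |z|²)/(1 − |z|²))². -/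
/-!
In homogeneous coordinates the pair is the affine chart `wᵢ = fᵢ / f₀` of the triple
`f = (1 - |z|², z̄ + z, z̄ - z)`. Writing `fᵢ = wᵢ f₀` and using the product rule, the sigma model
equations for `w` follow from a linear condition on the lift: `∂∂̄f = α ∂̄f + β ∂f + γ f` with the
same coefficients for every component, where `⟨f, ∂f⟩ = α |f|²` and `⟨f, ∂̄f⟩ = β |f|²`. Indeed
the `γ` term drops out of `∂∂̄wᵢ`, and the two constraints turn the coefficients of `∂̄wᵢ` and
`∂wᵢ` into `∑ⱼ w̄ⱼ ∂wⱼ / A` and `∑ⱼ w̄ⱼ ∂̄wⱼ / A`. For this triple `|f|² = (1 + |z|²)²`, and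
`(1 + |z|²) (α, β, γ) = (z̄, z, -1)`.
-/

open Complex ComplexConjugate

open scoped Topology

/-- The real-linear map `v ↦ p v + q v̄`: the differential of a function with Wirtinger derivatives
`∂f = p` and `∂̄f = q`. -/
noncomputable def wirtingerCLM (p q : ℂ) : ℂ →L[ℝ] ℂ :=
  p • ContinuousLinearMap.id ℝ ℂ + q • (conjCLE : ℂ →L[ℝ] ℂ)

lemma wirtingerCLM_apply (p q v : ℂ) : wirtingerCLM p q v = p * v + q * conj v := rfl

/-- Real differentiability of `f` at `z` with Wirtinger derivatives `∂f = p` and `∂̄f = q`. -/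
def HasWirtingerDerivAt (f : ℂ → ℂ) (p q z : ℂ) : Prop :=
  HasFDerivAt f (wirtingerCLM p q) z

namespace HasWirtingerDerivAt

variable {f g : ℂ → ℂ} {p q r s z : ℂ}

lemma wdz_eq (hf : HasWirtingerDerivAt f p q z) : wdz f z = p := by
  rw [wdz, HasFDerivAt.fderiv hf, wirtingerCLM_apply, wirtingerCLM_apply, map_one, conj_I]
  linear_combination (-(p - q) / 2) * I_sq

lemma wdzbar_eq (hf : HasWirtingerDerivAt f p q z) : wdzbar f z = q := by
  rw [wdzbar, HasFDerivAt.fderiv hf, wirtingerCLM_apply, wirtingerCLM_apply, map_one, conj_I]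
  linear_combination ((p - q) / 2) * I_sq

lemma congr_deriv (hf : HasWirtingerDerivAt f p q z) (hp : p = r) (hq : q = s) :
    HasWirtingerDerivAt f r s z :=
  hp ▸ hq ▸ hf

lemma add (hf : HasWirtingerDerivAt f p q z) (hg : HasWirtingerDerivAt g r s z) :
    HasWirtingerDerivAt (f + g) (p + r) (q + s) z :=
  (HasFDerivAt.add hf hg).congr_fderiv <| ContinuousLinearMap.ext fun v => by
    simp only [add_apply, wirtingerCLM_apply]
    ring

lemma neg (hf : HasWirtingerDerivAt f p q z) : HasWirtingerDerivAt (-f) (-p) (-q) z :=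
  (HasFDerivAt.neg hf).congr_fderiv <| ContinuousLinearMap.ext fun v => by
    simp only [neg_apply, wirtingerCLM_apply]
    ring

lemma sub (hf : HasWirtingerDerivAt f p q z) (hg : HasWirtingerDerivAt g r s z) :
    HasWirtingerDerivAt (f - g) (p - r) (q - s) z :=
  (HasFDerivAt.sub hf hg).congr_fderiv <| ContinuousLinearMap.ext fun v => by
    simp only [sub_apply, wirtingerCLM_apply]
    ring

lemma mul (hf : HasWirtingerDerivAt f p q z) (hg : HasWirtingerDerivAt g r s z) :
    HasWirtingerDerivAt (f * g) (p * g z + f z * r) (q * g z + f z * s) z :=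
  (HasFDerivAt.mul hf hg).congr_fderiv <| ContinuousLinearMap.ext fun v => by
    simp only [add_apply, smul_apply, smul_eq_mul, wirtingerCLM_apply]
    ring

end HasWirtingerDerivAt

lemma hasWirtingerDerivAt_const (c z : ℂ) : HasWirtingerDerivAt (fun _ => c) 0 0 z :=
  (hasFDerivAt_const c z).congr_fderiv <| ContinuousLinearMap.ext fun v => by
    simp [wirtingerCLM_apply]

lemma hasWirtingerDerivAt_id (z : ℂ) : HasWirtingerDerivAt (fun t => t) 1 0 z :=
  (hasFDerivAt_id z).congr_fderiv <| ContinuousLinearMap.ext fun v => by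
    simp [wirtingerCLM_apply]

lemma hasWirtingerDerivAt_conj (z : ℂ) : HasWirtingerDerivAt (fun t => conj t) 0 1 z :=
  (conjCLE : ℂ →L[ℝ] ℂ).hasFDerivAt.congr_fderiv <| ContinuousLinearMap.ext fun v => by
    simp [wirtingerCLM_apply]

lemma hasWirtingerDerivAt_normSq (z : ℂ) :
    HasWirtingerDerivAt (fun t => (normSq t : ℂ)) (conj z) z z := by
  simp only [normSq_eq_conj_mul_self]
  exact ((hasWirtingerDerivAt_conj z).mul (hasWirtingerDerivAt_id z)).congr_deriv
    (by simp) (by simp)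

section Calculus

variable {f g : ℂ → ℂ} {z : ℂ}

lemma hasWirtingerDerivAt_wdz_wdzbar (hf : DifferentiableAt ℝ f z) :
    HasWirtingerDerivAt f (wdz f z) (wdzbar f z) z := by
  refine hf.hasFDerivAt.congr_fderiv <| ContinuousLinearMap.ext fun v => ?_
  have hv : fderiv ℝ f z v = v.re * fderiv ℝ f z 1 + v.im * fderiv ℝ f z I := by
    conv_lhs => rw [show v = v.re • (1 : ℂ) + v.im • I by simp [re_add_im]]
    rw [map_add, map_smul, map_smul, real_smul, real_smul]
  have hre : v + conj v = 2 * v.re := by simp [add_conj]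
  have him : v - conj v = 2 * v.im * I := by simp [sub_conj]
  rw [hv, wirtingerCLM_apply, wdz, wdzbar]
  linear_combination (-fderiv ℝ f z 1 / 2) * hre + (I * fderiv ℝ f z I / 2) * him +
    v.im * fderiv ℝ f z I * I_sq

lemma wdz_mul (hf : DifferentiableAt ℝ f z) (hg : DifferentiableAt ℝ g z) :
    wdz (f * g) z = wdz f z * g z + f z * wdz g z :=
  ((hasWirtingerDerivAt_wdz_wdzbar hf).mul (hasWirtingerDerivAt_wdz_wdzbar hg)).wdz_eq

lemma wdzbar_mul (hf : DifferentiableAt ℝ f z) (hg : DifferentiableAt ℝ g z) :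
    wdzbar (f * g) z = wdzbar f z * g z + f z * wdzbar g z :=
  ((hasWirtingerDerivAt_wdz_wdzbar hf).mul (hasWirtingerDerivAt_wdz_wdzbar hg)).wdzbar_eq

lemma wdz_eq_of_eventuallyEq (h : f =ᶠ[𝓝 z] g) : wdz f z = wdz g z := by
  simp only [wdz, h.fderiv_eq]

lemma wdzbar_eventuallyEq (h : f =ᶠ[𝓝 z] g) : wdzbar f =ᶠ[𝓝 z] wdzbar g :=
  (h.fderiv (𝕜 := ℝ)).mono fun t ht => by simp only [wdzbar, ht]

lemma differentiableAt_wdzbar (hf : ContDiffAt ℝ 2 f z) :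
    DifferentiableAt ℝ (wdzbar f) z := by
  have hfd : DifferentiableAt ℝ (fderiv ℝ f) z :=
    (hf.fderiv_right (m := 1) (by norm_num)).differentiableAt one_ne_zero
  unfold wdzbar
  fun_prop

lemma wdz_wdzbar_mul (hf : ContDiffAt ℝ 2 f z) (hg : ContDiffAt ℝ 2 g z) :
    wdz (wdzbar (f * g)) z = wdz (wdzbar f) z * g z + wdzbar f z * wdz g z +
      wdz f z * wdzbar g z + f z * wdz (wdzbar g) z := by
  have differentiable_near {h : ℂ → ℂ} (hh : ContDiffAt ℝ 2 h z) :
      ∀ᶠ t in 𝓝 z, DifferentiableAt ℝ h t :=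
    (hh.eventually (by simp)).mono fun t ht => ht.differentiableAt two_ne_zero
  have hbar : wdzbar (f * g) =ᶠ[𝓝 z] wdzbar f * g + f * wdzbar g := by
    filter_upwards [differentiable_near hf, differentiable_near hg] with t hft hgt
    exact wdzbar_mul hft hgt
  have hf' := hasWirtingerDerivAt_wdz_wdzbar (hf.differentiableAt two_ne_zero)
  have hg' := hasWirtingerDerivAt_wdz_wdzbar (hg.differentiableAt two_ne_zero)
  have hfbar' := hasWirtingerDerivAt_wdz_wdzbar (differentiableAt_wdzbar hf)
  have hgbar' := hasWirtingerDerivAt_wdz_wdzbar (differentiableAt_wdzbar hg)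
  rw [wdz_eq_of_eventuallyEq hbar, ((hfbar'.mul hg').add (hf'.mul hgbar')).wdz_eq]
  ring

lemma eventuallyEq_div_mul (hg : ContinuousAt g z) (h0 : g z ≠ 0) : f =ᶠ[𝓝 z] f / g * g :=
  (hg.eventually_ne h0).mono fun _ ht => (div_mul_cancel₀ _ ht).symm

lemma differentiableAt_real_div (hf : DifferentiableAt ℝ f z) (hg : DifferentiableAt ℝ g z)
    (h0 : g z ≠ 0) : DifferentiableAt ℝ (f / g) z := by
  rw [div_eq_mul_inv]
  exact hf.mul (hg.inv h0)

lemma contDiffAt_real_div {n : WithTop ℕ∞} (hf : ContDiffAt ℝ n f z) (hg : ContDiffAt ℝ n g z)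
    (h0 : g z ≠ 0) : ContDiffAt ℝ n (f / g) z := by
  rw [div_eq_mul_inv]
  exact hf.mul (hg.inv h0)

lemma wdz_eq_wdz_div_mul_add (hf : DifferentiableAt ℝ f z) (hg : DifferentiableAt ℝ g z)
    (h0 : g z ≠ 0) : wdz f z = wdz (f / g) z * g z + (f / g) z * wdz g z := by
  rw [wdz_eq_of_eventuallyEq (eventuallyEq_div_mul hg.continuousAt h0),
    wdz_mul (differentiableAt_real_div hf hg h0) hg]

lemma wdzbar_eq_wdzbar_div_mul_add (hf : DifferentiableAt ℝ f z) (hg : DifferentiableAt ℝ g z)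
    (h0 : g z ≠ 0) : wdzbar f z = wdzbar (f / g) z * g z + (f / g) z * wdzbar g z := by
  rw [(wdzbar_eventuallyEq (eventuallyEq_div_mul hg.continuousAt h0)).eq_of_nhds,
    wdzbar_mul (differentiableAt_real_div hf hg h0) hg]

lemma wdz_wdzbar_eq_wdz_wdzbar_div_mul_add (hf : ContDiffAt ℝ 2 f z) (hg : ContDiffAt ℝ 2 g z)
    (h0 : g z ≠ 0) :
    wdz (wdzbar f) z = wdz (wdzbar (f / g)) z * g z + wdzbar (f / g) z * wdz g z +
      wdz (f / g) z * wdzbar g z + (f / g) z * wdz (wdzbar g) z := by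
  rw [wdz_eq_of_eventuallyEq (wdzbar_eventuallyEq (eventuallyEq_div_mul hg.continuousAt h0)),
    wdz_wdzbar_mul (contDiffAt_real_div hf hg h0) hg]

lemma wdz_wdzbar_div_of_linear {α β γ : ℂ} (hf : ContDiffAt ℝ 2 f z) (hg : ContDiffAt ℝ 2 g z)
    (h0 : g z ≠ 0)
    (hfz : wdz (wdzbar f) z = α * wdzbar f z + β * wdz f z + γ * f z)
    (hgz : wdz (wdzbar g) z = α * wdzbar g z + β * wdz g z + γ * g z) :
    wdz (wdzbar (f / g)) z =
      (α - wdz g z / g z) * wdzbar (f / g) z + (β - wdzbar g z / g z) * wdz (f / g) z := by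
  have hf1 := hf.differentiableAt two_ne_zero
  have hg1 := hg.differentiableAt two_ne_zero
  have hf0 : f z = (f / g) z * g z := (div_mul_cancel₀ _ h0).symm
  rw [wdz_wdzbar_eq_wdz_wdzbar_div_mul_add hf hg h0, wdz_eq_wdz_div_mul_add hf1 hg1 h0,
    wdzbar_eq_wdzbar_div_mul_add hf1 hg1 h0, hgz, hf0] at hfz
  field_simp
  linear_combination hfz

end Calculus

section SigmaModel

/-- The density `A = 1 + ∑ⱼ |wⱼ|²` of the `CPⁿ` sigma model in affine coordinates `w`, with values
in `ℂ` so that it can divide complex expressions. -/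
noncomputable def sigmaDensity {ι : Type*} [Fintype ι] (w : ι → ℂ → ℂ) (z : ℂ) : ℂ :=
  1 + ∑ j, (normSq (w j z) : ℂ)

/-- The `CPⁿ` sigma model equations in affine coordinates `w` at the point `z`. -/
def IsSigmaModelSolutionAt {ι : Type*} [Fintype ι] (w : ι → ℂ → ℂ) (z : ℂ) : Prop :=
  ∀ i, wdz (wdzbar (w i)) z -
    ∑ j, conj (w j z) / sigmaDensity w z *
      (wdz (w i) z * wdzbar (w j) z + wdzbar (w i) z * wdz (w j) z) = 0

lemma sigmaDensity_ne_zero {ι : Type*} [Fintype ι] (w : ι → ℂ → ℂ) (z : ℂ) :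
    sigmaDensity w z ≠ 0 := by
  have hpos : 0 < 1 + ∑ j, normSq (w j z) :=
    add_pos_of_pos_of_nonneg one_pos (Finset.sum_nonneg fun j _ => normSq_nonneg _)
  rw [sigmaDensity]
  exact_mod_cast hpos.ne'

lemma sigmaDensity_fin_two (w : Fin 2 → ℂ → ℂ) (z : ℂ) :
    sigmaDensity w z = 1 + (normSq (w 0 z) : ℂ) + (normSq (w 1 z) : ℂ) := by
  rw [sigmaDensity, Fin.sum_univ_two, add_assoc]

lemma isSigmaModelSolutionAt_fin_two {w : Fin 2 → ℂ → ℂ} {z : ℂ} :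
    IsSigmaModelSolutionAt w z ↔
      (wdz (wdzbar (w 0)) z
          - 2 * conj (w 0 z) / sigmaDensity w z * wdz (w 0) z * wdzbar (w 0) z
          - conj (w 1 z) / sigmaDensity w z *
            (wdz (w 0) z * wdzbar (w 1) z + wdzbar (w 0) z * wdz (w 1) z) = 0) ∧
      (wdz (wdzbar (w 1)) z
          - 2 * conj (w 1 z) / sigmaDensity w z * wdz (w 1) z * wdzbar (w 1) z
          - conj (w 0 z) / sigmaDensity w z *
            (wdz (w 0) z * wdzbar (w 1) z + wdzbar (w 0) z * wdz (w 1) z) = 0) := by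
  simp only [IsSigmaModelSolutionAt, Fin.forall_fin_two, Fin.sum_univ_two]
  refine and_congr (Eq.congr_left ?_) (Eq.congr_left ?_) <;> ring

/-- The affine coordinates `wᵢ = fᵢ / f₀` of the map to `CPⁿ` with homogeneous coordinates `f`. -/
noncomputable def affineCoords {n : ℕ} (f : Fin (n + 1) → ℂ → ℂ) (i : Fin n) : ℂ → ℂ :=
  f i.succ / f 0

variable {n : ℕ} {f : Fin (n + 1) → ℂ → ℂ} {z : ℂ}

lemma sum_normSq_eq_mul_sigmaDensity (h0 : f 0 z ≠ 0) :
    ∑ k, (normSq (f k z) : ℂ) = normSq (f 0 z) * sigmaDensity (affineCoords f) z := by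
  have hN : (normSq (f 0 z) : ℂ) ≠ 0 := by simpa using h0
  simp only [Fin.sum_univ_succ, sigmaDensity, affineCoords, Pi.div_apply, map_div₀, ofReal_div,
    mul_add, mul_one, Finset.mul_sum, mul_div_cancel₀ _ hN]

/-- `d` and `e` are the values at `z` of one of `∂`, `∂̄` on the homogeneous and on the affine
coordinates, related by the product rule for `fᵢ = wᵢ f₀`. -/
lemma sum_conj_affineCoords_div_sigmaDensity_mul (h0 : f 0 z ≠ 0)
    {d : Fin (n + 1) → ℂ} {e : Fin n → ℂ} {α : ℂ}
    (hd : ∀ i, d i.succ = e i * f 0 z + affineCoords f i z * d 0)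
    (hα : ∑ k, conj (f k z) * d k = α * ∑ k, (normSq (f k z) : ℂ)) :
    ∑ j, conj (affineCoords f j z) / sigmaDensity (affineCoords f) z * e j = α - d 0 / f 0 z := by
  have hS := sigmaDensity_ne_zero (affineCoords f) z
  have hN : (normSq (f 0 z) : ℂ) ≠ 0 := by simpa using h0
  have hterm (j : Fin n) : conj (f j.succ z) * d j.succ =
      normSq (f 0 z) * (conj (affineCoords f j z) * e j) +
        conj (f 0 z) * d 0 * normSq (affineCoords f j z) := by
    have hj : f j.succ z = affineCoords f j z * f 0 z := (div_mul_cancel₀ _ h0).symm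
    rw [hd, hj, map_mul, normSq_eq_conj_mul_self, normSq_eq_conj_mul_self]
    ring
  have hsum : normSq (f 0 z) * ∑ j, conj (affineCoords f j z) * e j =
      normSq (f 0 z) * ((α - d 0 / f 0 z) * sigmaDensity (affineCoords f) z) := by
    have hdiv : conj (f 0 z) * d 0 = normSq (f 0 z) * (d 0 / f 0 z) := by
      rw [normSq_eq_conj_mul_self]
      field_simp
    rw [sum_normSq_eq_mul_sigmaDensity h0, Fin.sum_univ_succ] at hα
    simp only [hterm, Finset.sum_add_distrib, ← Finset.mul_sum] at hα
    rw [hdiv] at hα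
    rw [sigmaDensity] at hα ⊢
    linear_combination hα
  simp only [div_mul_eq_mul_div, ← Finset.sum_div]
  rw [mul_left_cancel₀ hN hsum, mul_div_cancel_right₀ _ hS]

theorem isSigmaModelSolutionAt_affineCoords {α β γ : ℂ} (hf : ∀ k, ContDiffAt ℝ 2 (f k) z)
    (h0 : f 0 z ≠ 0)
    (hα : ∑ k, conj (f k z) * wdz (f k) z = α * ∑ k, (normSq (f k z) : ℂ))
    (hβ : ∑ k, conj (f k z) * wdzbar (f k) z = β * ∑ k, (normSq (f k z) : ℂ))
    (hfz : ∀ k, wdz (wdzbar (f k)) z = α * wdzbar (f k) z + β * wdz (f k) z + γ * f k z) :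
    IsSigmaModelSolutionAt (affineCoords f) z := by
  intro i
  have hf1 k := (hf k).differentiableAt two_ne_zero
  have hα' := sum_conj_affineCoords_div_sigmaDensity_mul h0
    (fun j => wdz_eq_wdz_div_mul_add (hf1 j.succ) (hf1 0) h0) hα
  have hβ' := sum_conj_affineCoords_div_sigmaDensity_mul h0
    (fun j => wdzbar_eq_wdzbar_div_mul_add (hf1 j.succ) (hf1 0) h0) hβ
  have hi : wdz (wdzbar (affineCoords f i)) z =
      (α - wdz (f 0) z / f 0 z) * wdzbar (affineCoords f i) z +
        (β - wdzbar (f 0) z / f 0 z) * wdz (affineCoords f i) z :=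
    wdz_wdzbar_div_of_linear (hf i.succ) (hf 0) h0 (hfz i.succ) (hfz 0)
  rw [hi, ← hα', ← hβ', sub_eq_zero, Finset.sum_mul, Finset.sum_mul, ← Finset.sum_add_distrib]
  refine Finset.sum_congr rfl fun j _ => ?_
  rw [affineCoords, affineCoords]
  ring

end SigmaModel

section MixedTriple

/-- Homogeneous coordinates of the mixed solution. Up to a unitary change of coordinates this is
`(-√2 z̄, 1 - |z|², √2 z)`, the middle term of the Veronese sequence generated by the holomorphic
curve `(1, √2 z, z²)`. -/
noncomputable def mixedTriple : Fin 3 → ℂ → ℂ :=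
  ![fun t => 1 - (normSq t : ℂ), fun t => conj t + t, fun t => conj t - t]

lemma mixedTriple_zero (z : ℂ) : mixedTriple 0 z = 1 - normSq z := rfl

lemma mixedTriple_one (z : ℂ) : mixedTriple 1 z = conj z + z := rfl

lemma mixedTriple_two (z : ℂ) : mixedTriple 2 z = conj z - z := rfl

lemma contDiffAt_mixedTriple (k : Fin 3) (z : ℂ) : ContDiffAt ℝ 2 (mixedTriple k) z := by
  have hconj : ContDiffAt ℝ 2 (fun t : ℂ => conj t) z := conjCLE.contDiff.contDiffAt
  have hnormSq : ContDiffAt ℝ 2 (fun t : ℂ => (normSq t : ℂ)) z := by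
    simp only [normSq_eq_conj_mul_self]
    exact hconj.mul contDiffAt_id
  fin_cases k
  · exact contDiffAt_const.sub hnormSq
  · exact hconj.add contDiffAt_id
  · exact hconj.sub contDiffAt_id

lemma hasWirtingerDerivAt_mixedTriple (k : Fin 3) (z : ℂ) :
    HasWirtingerDerivAt (mixedTriple k) (![-conj z, 1, -1] k) (![-z, 1, 1] k) z := by
  have hconj := hasWirtingerDerivAt_conj z
  have hid := hasWirtingerDerivAt_id z
  fin_cases k
  · exact ((hasWirtingerDerivAt_const 1 z).sub (hasWirtingerDerivAt_normSq z)).congr_deriv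
      (by simp) (by simp)
  · exact (hconj.add hid).congr_deriv (by simp) (by simp)
  · exact (hconj.sub hid).congr_deriv (by simp) (by simp)

lemma wdz_mixedTriple (k : Fin 3) (z : ℂ) : wdz (mixedTriple k) z = ![-conj z, 1, -1] k :=
  (hasWirtingerDerivAt_mixedTriple k z).wdz_eq

lemma wdzbar_mixedTriple (k : Fin 3) (z : ℂ) : wdzbar (mixedTriple k) z = ![-z, 1, 1] k :=
  (hasWirtingerDerivAt_mixedTriple k z).wdzbar_eq

lemma wdz_wdzbar_mixedTriple (k : Fin 3) (z : ℂ) :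
    wdz (wdzbar (mixedTriple k)) z = ![-1, 0, 0] k := by
  rw [funext (wdzbar_mixedTriple k)]
  fin_cases k
  · exact (hasWirtingerDerivAt_id z).neg.wdz_eq
  · exact (hasWirtingerDerivAt_const 1 z).wdz_eq
  · exact (hasWirtingerDerivAt_const 1 z).wdz_eq

lemma sum_normSq_mixedTriple (z : ℂ) :
    ∑ k, (normSq (mixedTriple k z) : ℂ) = (1 + normSq z) ^ 2 := by
  simp only [Fin.sum_univ_three, mixedTriple_zero, mixedTriple_one, mixedTriple_two,
    normSq_eq_conj_mul_self, map_add, map_sub, map_mul, map_one, conj_conj]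
  ring

lemma sum_conj_mul_wdz_mixedTriple (z : ℂ) :
    ∑ k, conj (mixedTriple k z) * wdz (mixedTriple k) z = conj z * (1 + normSq z) := by
  simp only [Fin.sum_univ_three, wdz_mixedTriple, mixedTriple_zero, mixedTriple_one,
    mixedTriple_two, normSq_eq_conj_mul_self, map_add, map_sub, map_mul, map_one, conj_conj,
    Matrix.cons_val]
  ring

lemma sum_conj_mul_wdzbar_mixedTriple (z : ℂ) :
    ∑ k, conj (mixedTriple k z) * wdzbar (mixedTriple k) z = z * (1 + normSq z) := by
  simp only [Fin.sum_univ_three, wdzbar_mixedTriple, mixedTriple_zero, mixedTriple_one,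
    mixedTriple_two, normSq_eq_conj_mul_self, map_add, map_sub, map_mul, map_one, conj_conj,
    Matrix.cons_val]
  ring

lemma one_add_normSq_mul_wdz_wdzbar_mixedTriple (k : Fin 3) (z : ℂ) :
    (1 + normSq z) * wdz (wdzbar (mixedTriple k)) z =
      conj z * wdzbar (mixedTriple k) z + z * wdz (mixedTriple k) z - mixedTriple k z := by
  rw [wdz_wdzbar_mixedTriple, wdz_mixedTriple, wdzbar_mixedTriple]
  match k with
  | 0 => simp only [mixedTriple_zero, normSq_eq_conj_mul_self, Matrix.cons_val]; ring
  | 1 => simp only [mixedTriple_one, Matrix.cons_val]; ring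
  | 2 => simp only [mixedTriple_two, Matrix.cons_val]; ring

lemma mixedTriple_zero_ne_zero {z : ℂ} (hz : normSq z ≠ 1) : mixedTriple 0 z ≠ 0 :=
  sub_ne_zero.mpr <| by exact_mod_cast hz.symm

lemma isSigmaModelSolutionAt_mixedTriple {z : ℂ} (hz : normSq z ≠ 1) :
    IsSigmaModelSolutionAt (affineCoords mixedTriple) z := by
  have hN : (1 + normSq z : ℂ) ≠ 0 := by
    exact_mod_cast (add_pos_of_pos_of_nonneg one_pos (normSq_nonneg z)).ne'
  refine isSigmaModelSolutionAt_affineCoords (α := conj z / (1 + normSq z))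
    (β := z / (1 + normSq z)) (γ := -1 / (1 + normSq z))
    (fun k => contDiffAt_mixedTriple k z) (mixedTriple_zero_ne_zero hz) ?_ ?_ fun k => ?_
  · rw [sum_conj_mul_wdz_mixedTriple, sum_normSq_mixedTriple]
    field_simp
  · rw [sum_conj_mul_wdzbar_mixedTriple, sum_normSq_mixedTriple]
    field_simp
  · field_simp
    linear_combination one_add_normSq_mul_wdz_wdzbar_mixedTriple k z

lemma sigmaDensity_mixedTriple {z : ℂ} (hz : normSq z ≠ 1) :
    sigmaDensity (affineCoords mixedTriple) z = ((1 + normSq z) / (1 - normSq z)) ^ 2 := by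
  have h0 := mixedTriple_zero_ne_zero hz
  have h0' : (1 - normSq z : ℂ) ≠ 0 := h0
  have hsum := sum_normSq_eq_mul_sigmaDensity h0
  have hnormSq : (normSq (mixedTriple 0 z) : ℂ) = (1 - normSq z) ^ 2 := by
    simp only [mixedTriple_zero, normSq_eq_conj_mul_self, map_sub, map_mul, map_one, conj_conj]
    ring
  rw [sum_normSq_mixedTriple, hnormSq] at hsum
  rw [div_pow, hsum, mul_div_cancel_left₀ _ (pow_ne_zero 2 h0')]

end MixedTriple

/-- The mixed pair `w₁ = (z̄+z)/(1-|z|²)`, `w₂ = (z̄-z)/(1-|z|²)`, defined for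
`|z| ≠ 1`, solves the `CP²` sigma model equations and satisfies
`A = 1 + |w₁|² + |w₂|² = ((1+|z|²)/(1-|z|²))²`. -/
theorem cp2_example_mixed :
    ∀ z : ℂ, normSq z ≠ 1 →
      (let w₁ : ℂ → ℂ := fun t => (conj t + t) / (1 - ((normSq t : ℝ) : ℂ))
       let w₂ : ℂ → ℂ := fun t => (conj t - t) / (1 - ((normSq t : ℝ) : ℂ))
       let A : ℂ → ℂ := fun t =>
         1 + ((normSq (w₁ t) : ℝ) : ℂ) + ((normSq (w₂ t) : ℝ) : ℂ)
       (wdz (fun t => wdzbar w₁ t) z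
          - 2 * conj (w₁ z) / A z * wdz w₁ z * wdzbar w₁ z
          - conj (w₂ z) / A z * (wdz w₁ z * wdzbar w₂ z + wdzbar w₁ z * wdz w₂ z) = 0) ∧
       (wdz (fun t => wdzbar w₂ t) z
          - 2 * conj (w₂ z) / A z * wdz w₂ z * wdzbar w₂ z
          - conj (w₁ z) / A z * (wdz w₁ z * wdzbar w₂ z + wdzbar w₁ z * wdz w₂ z) = 0) ∧
       A z = ((1 + ((normSq z : ℝ) : ℂ)) / (1 - ((normSq z : ℝ) : ℂ))) ^ 2) := by
  intro z hz w₁ w₂ A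
  have hA : sigmaDensity (affineCoords mixedTriple) z = A z := sigmaDensity_fin_two _ z
  obtain ⟨h₁, h₂⟩ := isSigmaModelSolutionAt_fin_two.mp (isSigmaModelSolutionAt_mixedTriple hz)
  rw [hA] at h₁ h₂
  exact ⟨h₁, h₂, hA.symm.trans (sigmaDensity_mixedTriple hz)⟩
end
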